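/- arXiv:2010.04662 — 5 statements merged into one kernel-verified Lean document; each statement's English description precedes it below -/
import Mathlib

section
/- Let K be a field, s ∈ ℤ^n, and let P ∈ K[x]^{m×n} be in s-reduced form with t = rdeg_s(P) ∈ ℤ^m. Then for every M ∈ K[x]^{k×m}, lm_s(MP) = lm_t(M) · lm_s(P). -/
open Polynomial Matrix

/-- The degree of a polynomial, viewed in `ℤ ∪ {-∞}`. -/
noncomputable def degZ {K : Type*} [Field K] (p : K[X]) : WithBot ℤ :=
  p.degree.map fun a : ℕ => (a : ℤ)

/-- The `s`-row degree of a (row) vector of polynomials. -/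
noncomputable def rdegRow {K : Type*} [Field K] {ν : Type*} [Fintype ν]
    (s : ν → ℤ) (v : ν → K[X]) : WithBot ℤ :=
  Finset.univ.sup fun j => degZ (v j) + (s j : WithBot ℤ)

/-- The `s`-row degree of a polynomial matrix. -/
noncomputable def rdeg {K : Type*} [Field K] {ι ν : Type*} [Fintype ν]
    (s : ν → ℤ) (P : Matrix ι ν K[X]) : ι → WithBot ℤ :=
  fun i => rdegRow s (P i)

/-- The `t`-column degree of a polynomial matrix. -/
noncomputable def cdeg {K : Type*} [Field K] {ι ν : Type*} [Fintype ι]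
    (t : ι → ℤ) (P : Matrix ι ν K[X]) : ν → WithBot ℤ :=
  fun j => Finset.univ.sup fun i => degZ (P i j) + (t i : WithBot ℤ)

/-- Coefficient of integer degree `d` of a polynomial (0 if `d < 0`). -/
noncomputable def coeffZ {K : Type*} [Field K] (p : K[X]) (d : ℤ) : K :=
  if 0 ≤ d then p.coeff d.toNat else 0

/-- The `s`-leading matrix of a polynomial matrix. -/
noncomputable def lm {K : Type*} [Field K] {ι ν : Type*} [Fintype ν]
    (s : ν → ℤ) (P : Matrix ι ν K[X]) : Matrix ι ν K :=
  Matrix.of fun i j =>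
    (rdeg s P i).recBotCoe 0 fun t => coeffZ (P i j) (t - s j)

/-- `P` is in `s`-reduced form: its `s`-leading matrix has full row rank,
i.e. its rows are linearly independent over `K`. -/
def IsReducedForm {K : Type*} [Field K] {ι ν : Type*} [Fintype ν]
    (s : ν → ℤ) (P : Matrix ι ν K[X]) : Prop :=
  LinearIndependent K fun i => lm s P i

open Classical in
/-- The `s`-pivot index of a row vector: the largest column index where the
`s`-row degree is attained (with a nonzero entry); `⊥` for the zero row. -/
noncomputable def piv {K : Type*} [Field K] {ν : Type*} [Fintype ν] [LinearOrder ν]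
    (s : ν → ℤ) (v : ν → K[X]) : WithBot ν :=
  (Finset.univ.filter fun j => v j ≠ 0 ∧ degZ (v j) + (s j : WithBot ℤ) = rdegRow s v).max

/-- The `s`-pivot degree of a row vector (junk value `0` for the zero row). -/
noncomputable def pivDeg {K : Type*} [Field K] {ν : Type*} [Fintype ν] [LinearOrder ν]
    (s : ν → ℤ) (v : ν → K[X]) : ℕ :=
  ((piv s v).map fun j => (v j).natDegree).unbotD 0

/-- `P` is in `s`-weak Popov form: no zero row and strictly increasing `s`-pivot indices. -/
def IsWeakPopov {K : Type*} [Field K] {ι ν : Type*} [Fintype ν] [LinearOrder ν] [Preorder ι]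
    (s : ν → ℤ) (P : Matrix ι ν K[X]) : Prop :=
  (∀ i, piv s (P i) ≠ ⊥) ∧ StrictMono fun i => piv s (P i)

/-- `P` is in `s`-unordered weak Popov form: no zero row and pairwise distinct
`s`-pivot indices. -/
def IsUWeakPopov {K : Type*} [Field K] {ι ν : Type*} [Fintype ν] [LinearOrder ν]
    (s : ν → ℤ) (P : Matrix ι ν K[X]) : Prop :=
  (∀ i, piv s (P i) ≠ ⊥) ∧ Function.Injective fun i => piv s (P i)

/-- `P` is in `s`-Popov form: `s`-weak Popov, monic pivots, and each pivot entry
has degree strictly larger than the other entries of its column. -/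
def IsPopov {K : Type*} [Field K] {ι ν : Type*} [Fintype ν] [LinearOrder ν] [Preorder ι]
    (s : ν → ℤ) (P : Matrix ι ν K[X]) : Prop :=
  IsWeakPopov s P ∧
    ∀ i (j : ν), piv s (P i) = (j : WithBot ν) →
      (P i j).Monic ∧ ∀ i', i' ≠ i → (P i' j).degree < (P i j).degree

/-- The row space of a polynomial matrix. -/
noncomputable def rowSpace {K : Type*} [Field K] {ι ν : Type*} (P : Matrix ι ν K[X]) :
    Submodule K[X] (ν → K[X]) :=
  Submodule.span K[X] (Set.range fun i => P i)

/-- The rows of `B` form a basis of the module `M`. -/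
def IsBasisOf {K : Type*} [Field K] {ι ν : Type*} (B : Matrix ι ν K[X])
    (M : Submodule K[X] (ν → K[X])) : Prop :=
  LinearIndependent K[X] (fun i => B i) ∧
    Submodule.span K[X] (Set.range fun i => B i) = M

/-- The left kernel of a polynomial matrix. -/
noncomputable def leftKernel {K : Type*} [Field K] {ι ν : Type*} [Fintype ι]
    (F : Matrix ι ν K[X]) : Submodule K[X] (ι → K[X]) :=
  LinearMap.ker F.vecMulLinear

theorem degZ_add_le_iff {K : Type*} [Field K] (p : K[X]) (s d : ℤ) :
    degZ p + (s : WithBot ℤ) ≤ (d : WithBot ℤ) ↔ ∀ e : ℤ, d - s < e → coeffZ p e = 0 := by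
  unfold degZ coeffZ
  by_cases hp : p = 0
  · subst hp
    simp
  · rw [Polynomial.degree_eq_natDegree hp]
    change (((p.natDegree : ℤ) : WithBot ℤ) + (s : WithBot ℤ) ≤ (d : WithBot ℤ)) ↔ _
    rw [← WithBot.coe_add, WithBot.coe_le_coe]
    constructor
    · intro h e he
      split_ifs with h0
      · apply Polynomial.coeff_eq_zero_of_natDegree_lt
        omega
      · rfl
    · intro h
      by_contra hc
      have h1 := h (p.natDegree : ℤ) (by omega)
      simp at h1
      exact hp h1

theorem rdegRow_le_iff {K : Type*} [Field K] {ν : Type*} [Fintype ν]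
    (s : ν → ℤ) (v : ν → K[X]) (d : ℤ) :
    rdegRow s v ≤ (d : WithBot ℤ) ↔ ∀ j, ∀ e : ℤ, d - s j < e → coeffZ (v j) e = 0 := by
  unfold rdegRow
  simp only [Finset.sup_le_iff, Finset.mem_univ, true_imp_iff, degZ_add_le_iff]

theorem rdegRow_eq_iff {K : Type*} [Field K] {ν : Type*} [Fintype ν]
    (s : ν → ℤ) (v : ν → K[X]) (d : ℤ) :
    rdegRow s v = (d : WithBot ℤ) ↔
      rdegRow s v ≤ (d : WithBot ℤ) ∧ ∃ j, coeffZ (v j) (d - s j) ≠ 0 := by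
  have key : rdegRow s v ≤ (d : WithBot ℤ) →
      ((∀ j, coeffZ (v j) (d - s j) = 0) ↔ rdegRow s v ≤ ((d - 1 : ℤ) : WithBot ℤ)) := by
    intro h
    rw [rdegRow_le_iff] at h ⊢
    constructor
    · intro h' j e he
      rcases eq_or_ne e (d - s j) with rfl | hne
      · exact h' j
      · exact h j e (by omega)
    · intro h' j
      exact h' j _ (by omega)
  constructor
  · intro h
    refine ⟨h.le, ?_⟩
    by_contra! hc
    have := (key h.le).1 hc
    rw [h, WithBot.coe_le_coe] at this
    omega
  · rintro ⟨h, j, hj⟩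
    by_contra hne
    refine hj ((key h).2 ?_ j)
    generalize rdegRow s v = r at h hne
    induction r using WithBot.recBotCoe with
    | bot => exact bot_le
    | coe r =>
      rw [WithBot.coe_le_coe] at h ⊢
      have : r ≠ d := fun h => hne (by rw [h])
      omega

theorem coeffZ_eq_zero_imp {K : Type*} [Field K] (p : K[X]) (a : ℤ) (ha : a < 0)
    (h : ∀ e, a < e → coeffZ p e = 0) : p = 0 := by
  ext n
  have := h n (by omega)
  simpa [coeffZ] using this

theorem coeffZ_mul {K : Type*} [Field K] (p q : K[X]) (a b : ℤ)
    (hp : ∀ e, a < e → coeffZ p e = 0) (hq : ∀ e, b < e → coeffZ q e = 0) :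
    coeffZ (p * q) (a + b) = coeffZ p a * coeffZ q b := by
  rcases lt_or_ge a 0 with ha | ha
  · rw [coeffZ_eq_zero_imp p a ha hp]; simp [coeffZ]
  rcases lt_or_ge b 0 with hb | hb
  · rw [coeffZ_eq_zero_imp q b hb hq]; simp [coeffZ]
  lift a to ℕ using ha
  lift b to ℕ using hb
  have hp' : p.natDegree ≤ a := by
    rw [Polynomial.natDegree_le_iff_coeff_eq_zero]
    intro N hN
    simpa [coeffZ] using hp N (by omega)
  have hq' : q.natDegree ≤ b := by
    rw [Polynomial.natDegree_le_iff_coeff_eq_zero]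
    intro N hN
    simpa [coeffZ] using hq N (by omega)
  have := Polynomial.coeff_mul_add_eq_of_natDegree_le hp' hq'
  have h0 : (0 : ℤ) ≤ (a : ℤ) + (b : ℤ) := by omega
  have h1 : ((a : ℤ) + (b : ℤ)).toNat = a + b := by omega
  simpa [coeffZ, h0, h1] using this

theorem coeffZ_sum {K : Type*} [Field K] {ι : Type*} (S : Finset ι) (f : ι → K[X]) (d : ℤ) :
    coeffZ (∑ i ∈ S, f i) d = ∑ i ∈ S, coeffZ (f i) d := by
  unfold coeffZ
  split_ifs <;> simp [Polynomial.finsetSum_coeff]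

theorem lm_apply_coe {K : Type*} [Field K] {ι ν : Type*} [Fintype ν]
    (s : ν → ℤ) (P : Matrix ι ν K[X]) (i : ι) (j : ν) (d : ℤ)
    (h : rdeg s P i = (d : WithBot ℤ)) : lm s P i j = coeffZ (P i j) (d - s j) := by
  simp [lm, h]

theorem lm_apply_bot {K : Type*} [Field K] {ι ν : Type*} [Fintype ν]
    (s : ν → ℤ) (P : Matrix ι ν K[X]) (i : ι) (j : ν)
    (h : rdeg s P i = ⊥) : lm s P i j = 0 := by
  simp [lm, h]

/-- Lemma on products of leading matrices:
if `P` is `s`-reduced with integer `s`-row degree `t`, then for every `M`,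
`lm_s(M·P) = lm_t(M) · lm_s(P)`. -/
theorem lm_mul {K : Type*} [Field K] {k m n : ℕ}
    (s : Fin n → ℤ) (P : Matrix (Fin m) (Fin n) K[X])
    (hred : IsReducedForm s P)
    (t : Fin m → ℤ) (ht : ∀ i, rdeg s P i = ((t i : ℤ) : WithBot ℤ))
    (M : Matrix (Fin k) (Fin m) K[X]) :
    lm s (M * P) = lm t M * lm s P := by
  ext i j
  rw [Matrix.mul_apply]
  have hP : ∀ l j, ∀ e : ℤ, t l - s j < e → coeffZ (P l j) e = 0 := fun l =>
    (rdegRow_le_iff s (P l) (t l)).1 (ht l).le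
  have hor : rdeg t M i = ⊥ ∨ ∃ d : ℤ, rdeg t M i = (d : WithBot ℤ) := by
    cases rdeg t M i with
    | bot => exact Or.inl rfl
    | coe d => exact Or.inr ⟨d, rfl⟩
  rcases hor with hD | ⟨d, hD⟩
  · have hM : ∀ l, M i l = 0 := fun l =>
      coeffZ_eq_zero_imp _ (-1) (by norm_num) fun e he =>
        (rdegRow_le_iff t (M i) (-1 + t l)).1
          (by change rdeg t M i ≤ _; rw [hD]; exact bot_le) l e (by omega)
    have hz : (M * P) i j = 0 := by simp [Matrix.mul_apply, hM]
    rw [Finset.sum_eq_zero fun l _ => by rw [lm_apply_bot t M i l hD, zero_mul]]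
    simp only [lm, Matrix.of_apply, hz]
    cases rdeg s (M * P) i <;> simp [coeffZ]
  · have hM : ∀ l, ∀ e : ℤ, d - t l < e → coeffZ (M i l) e = 0 :=
      (rdegRow_le_iff t (M i) d).1 hD.le
    have hc : ∀ j, coeffZ ((M * P) i j) (d - s j) = ∑ l, lm t M i l * lm s P l j := by
      intro j
      rw [Matrix.mul_apply, coeffZ_sum]
      refine Finset.sum_congr rfl fun l _ => ?_
      rw [lm_apply_coe t M i l d hD, lm_apply_coe s P l j _ (ht l),
        ← coeffZ_mul _ _ _ _ (hM l) (hP l j)]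
      congr 1
      ring
    have hle : rdegRow s ((M * P) i) ≤ (d : WithBot ℤ) := by
      rw [rdegRow_le_iff]
      intro j e he
      rw [Matrix.mul_apply, coeffZ_sum]
      refine Finset.sum_eq_zero fun l _ => ?_
      have := coeffZ_mul (M i l) (P l j) (e - (t l - s j)) (t l - s j)
        (fun e' he' => hM l e' (by omega)) (hP l j)
      rw [sub_add_cancel, hM l _ (by omega), zero_mul] at this
      exact this
    have heq : rdeg s (M * P) i = (d : WithBot ℤ) := by
      refine (rdegRow_eq_iff _ _ _).2 ⟨hle, ?_⟩
      by_contra! hcon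
      obtain ⟨l, hl⟩ := ((rdegRow_eq_iff t (M i) d).1 hD).2
      apply hl
      rw [← lm_apply_coe t M i l d hD]
      refine (Fintype.linearIndependent_iff.1 hred) (fun l => lm t M i l) ?_ l
      funext j
      have := (hc j).symm.trans (hcon j)
      simpa [Finset.sum_apply] using this
    rw [lm_apply_coe s _ i j d heq, hc]
end

section
/- Let K be a field, s ∈ ℤ^n, and let P ∈ K[x]^{m×n} be in s-unordered weak Popov form with s-pivot profile (j_i, δ_i) for 1 ≤ i ≤ m. Let σ be the permutation of {1,…,m} such that (j_{σ(i)})_{1≤i≤m} is strictly increasing. Then the s-Popov form of P (the unique basis of the row space of P in s-Popov form) has s-pivot profile (j_{σ(i)}, δ_{σ(i)}) for 1 ≤ i ≤ m. -/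
open Polynomial Matrix

/-- `(j, d)` is the leading position of `v` for the term order "s-degree, then index". -/
def Lead {K : Type*} [Field K] {n : ℕ} (s : Fin n → ℤ) (v : Fin n → K[X]) (j : Fin n) (d : ℕ) :
    Prop :=
  (v j).coeff d ≠ 0 ∧ ∀ k e, (v k).coeff e ≠ 0 →
    ((e : ℤ) + s k < d + s j ∨ ((e : ℤ) + s k = d + s j ∧ k ≤ j))

theorem degZ_of_ne {K : Type*} [Field K] {p : K[X]} (h : p ≠ 0) :
    degZ p = ((p.natDegree : ℤ) : WithBot ℤ) := by
  unfold degZ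
  rw [Polynomial.degree_eq_natDegree h]
  rfl

theorem degZ_zero' {K : Type*} [Field K] : degZ (0 : K[X]) = ⊥ := by
  unfold degZ
  rw [Polynomial.degree_zero]
  rfl

theorem Lead.natDegree_eq {K : Type*} [Field K] {n : ℕ} {s : Fin n → ℤ} {v : Fin n → K[X]}
    {j : Fin n} {d : ℕ} (h : Lead s v j d) : (v j).natDegree = d := by
  have h0 : v j ≠ 0 := by
    intro h0
    exact h.1 (by simp [h0])
  have h1 := Polynomial.le_natDegree_of_ne_zero h.1
  have h2 := h.2 j (v j).natDegree (by simpa using h0)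
  omega

theorem lead_of_piv {K : Type*} [Field K] {n : ℕ} {s : Fin n → ℤ} {v : Fin n → K[X]}
    {j : Fin n} (h : piv s v = (j : WithBot (Fin n))) : Lead s v j (v j).natDegree := by
  classical
  unfold piv at h
  have hj := Finset.mem_of_max h
  simp only [Finset.mem_filter, Finset.mem_univ, true_and] at hj
  obtain ⟨hj0, hj1⟩ := hj
  refine ⟨by simpa using hj0, ?_⟩
  intro k e hke
  have hk0 : v k ≠ 0 := by
    intro h0
    exact hke (by simp [h0])
  have he := Polynomial.le_natDegree_of_ne_zero hke
  have hle : degZ (v k) + (s k : WithBot ℤ) ≤ rdegRow s v :=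
    Finset.le_sup (f := fun j => degZ (v j) + (s j : WithBot ℤ)) (Finset.mem_univ k)
  have hle' := hle
  rw [← hj1, degZ_of_ne hk0, degZ_of_ne hj0] at hle'
  have hle2 : ((v k).natDegree : ℤ) + s k ≤ (v j).natDegree + s j := by exact_mod_cast hle'
  by_cases hlt : (e : ℤ) + s k < (v j).natDegree + s j
  · exact Or.inl hlt
  · right
    refine ⟨by omega, ?_⟩
    have heq : ((v k).natDegree : ℤ) + s k = (v j).natDegree + s j := by omega
    refine Finset.le_max_of_eq (s := Finset.univ.filter fun j =>
      v j ≠ 0 ∧ degZ (v j) + (s j : WithBot ℤ) = rdegRow s v) ?_ h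
    simp only [Finset.mem_filter, Finset.mem_univ, true_and]
    refine ⟨hk0, ?_⟩
    rw [← hj1, degZ_of_ne hk0, degZ_of_ne hj0]
    exact_mod_cast heq

theorem Lead.piv_eq {K : Type*} [Field K] {n : ℕ} {s : Fin n → ℤ} {v : Fin n → K[X]}
    {j : Fin n} {d : ℕ} (h : Lead s v j d) : piv s v = (j : WithBot (Fin n)) := by
  classical
  have hd := h.natDegree_eq
  have hj0 : v j ≠ 0 := by
    intro h0
    exact h.1 (by simp [h0])
  have hr : rdegRow s v = degZ (v j) + (s j : WithBot ℤ) := by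
    apply le_antisymm
    · refine Finset.sup_le fun k _ => ?_
      by_cases hk0 : v k = 0
      · simp [hk0, degZ_zero']
      · have := h.2 k (v k).natDegree (by simpa using hk0)
        rw [degZ_of_ne hk0, degZ_of_ne hj0]
        have h2 : ((v k).natDegree : ℤ) + s k ≤ (v j).natDegree + s j := by omega
        exact_mod_cast h2
    · exact Finset.le_sup (f := fun j => degZ (v j) + (s j : WithBot ℤ)) (Finset.mem_univ j)
  unfold piv
  apply le_antisymm
  · refine Finset.max_le fun k hk => ?_
    simp only [Finset.mem_filter, Finset.mem_univ, true_and] at hk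
    obtain ⟨hk0, hk1⟩ := hk
    rw [hr, degZ_of_ne hk0, degZ_of_ne hj0] at hk1
    have h2 : ((v k).natDegree : ℤ) + s k = (v j).natDegree + s j := by exact_mod_cast hk1
    have := h.2 k (v k).natDegree (by simpa using hk0)
    rcases this with h3 | h3
    · omega
    · exact_mod_cast h3.2
  · apply Finset.le_max
    simp [hj0, hr]

theorem Lead.pivDeg_eq {K : Type*} [Field K] {n : ℕ} {s : Fin n → ℤ} {v : Fin n → K[X]}
    {j : Fin n} {d : ℕ} (h : Lead s v j d) : pivDeg s v = d := by
  unfold pivDeg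
  rw [h.piv_eq]
  exact h.natDegree_eq

theorem Lead.smul {K : Type*} [Field K] {n : ℕ} {s : Fin n → ℤ} {v : Fin n → K[X]}
    {j : Fin n} {d : ℕ} (h : Lead s v j d) {c : K[X]} (hc : c ≠ 0) :
    Lead s (c • v) j (c.natDegree + d) := by
  have hd := h.natDegree_eq
  constructor
  · have hj0 : v j ≠ 0 := by
      intro h0
      exact h.1 (by simp [h0])
    simp only [Pi.smul_apply, smul_eq_mul]
    rw [← hd, Polynomial.coeff_mul_degree_add_degree]
    simp [hc, hj0]
  · intro k e hke
    simp only [Pi.smul_apply, smul_eq_mul] at hke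
    rw [Polynomial.coeff_mul] at hke
    obtain ⟨⟨a, b⟩, hab, hne⟩ := Finset.exists_ne_zero_of_sum_ne_zero hke
    rw [Finset.HasAntidiagonal.mem_antidiagonal] at hab
    simp only at hab hne
    have ha := Polynomial.le_natDegree_of_ne_zero (left_ne_zero_of_mul hne)
    have hb := h.2 k b (right_ne_zero_of_mul hne)
    push_cast
    rcases hb with hb | ⟨hb, hkj⟩
    · left; omega
    · by_cases hlt : (e : ℤ) + s k < c.natDegree + d + s j
      · exact Or.inl hlt
      · exact Or.inr ⟨by omega, hkj⟩

theorem lead_of_mem_span {K : Type*} [Field K] {m n : ℕ} {s : Fin n → ℤ}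
    {P : Matrix (Fin m) (Fin n) K[X]} {j : Fin m → Fin n} {d : Fin m → ℕ}
    (hL : ∀ i, Lead s (P i) (j i) (d i)) (hj : Function.Injective j) {v : Fin n → K[X]}
    (hv : v ∈ Submodule.span K[X] (Set.range fun i => P i)) (hv0 : v ≠ 0) :
    ∃ i e, Lead s v (j i) e ∧ d i ≤ e := by
  classical
  obtain ⟨c, rfl⟩ := (Submodule.mem_span_range_iff_exists_fun K[X]).1 hv
  have hne : (Finset.univ.filter fun i => c i ≠ 0).Nonempty := by
    by_contra hcon
    rw [Finset.not_nonempty_iff_eq_empty, Finset.filter_eq_empty_iff] at hcon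
    apply hv0
    refine Finset.sum_eq_zero fun i hi => ?_
    have := hcon hi
    simp only [ne_eq, not_not] at this
    simp [this]
  obtain ⟨i, hi, hmax⟩ := Finset.exists_max_image _
    (fun i => toLex ((((c i).natDegree + d i : ℕ) : ℤ) + s (j i), j i)) hne
  simp only [Finset.mem_filter, Finset.mem_univ, true_and] at hi hmax
  refine ⟨i, (c i).natDegree + d i, ⟨?_, ?_⟩, by omega⟩
  · rw [Finset.sum_apply, Polynomial.finsetSum_coeff, Finset.sum_eq_single i]
    · exact ((hL i).smul hi).1
    · intro k _ hki
      by_contra hcon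
      have hk : c k ≠ 0 := by
        intro h0
        exact hcon (by simp [h0])
      have h1 := ((hL k).smul hk).2 _ _ hcon
      have h2 := hmax k hk
      rw [Prod.Lex.toLex_le_toLex] at h2
      simp only at h2
      rcases h1 with h1 | ⟨h1, h1'⟩
      · rcases h2 with h2 | ⟨h2, h2'⟩ <;> omega
      · rcases h2 with h2 | ⟨h2, h2'⟩
        · omega
        · exact hki (hj (le_antisymm h2' h1'))
    · simp
  · intro k e hke
    rw [Finset.sum_apply, Polynomial.finsetSum_coeff] at hke
    obtain ⟨l, _, hl⟩ := Finset.exists_ne_zero_of_sum_ne_zero hke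
    have hcl : c l ≠ 0 := by
      intro h0
      exact hl (by simp [h0])
    have h1 := ((hL l).smul hcl).2 _ _ hl
    have h2 := hmax l hcl
    rw [Prod.Lex.toLex_le_toLex] at h2
    simp only at h2
    rcases h1 with h1 | ⟨h1, h1'⟩
    · left
      rcases h2 with h2 | ⟨h2, h2'⟩ <;> omega
    · rcases h2 with h2 | ⟨h2, h2'⟩
      · left; omega
      · right
        exact ⟨by omega, h1'.trans h2'⟩

/-- Lemma 2.4: the `s`-Popov form of a matrix in
`s`-unordered weak Popov form has the same `s`-pivot profile, up to the row
permutation sorting the pivot indices increasingly. -/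
theorem popov_pivot_profile {K : Type*} [Field K] {m n : ℕ}
    (s : Fin n → ℤ) (P : Matrix (Fin m) (Fin n) K[X])
    (hP : IsUWeakPopov s P)
    (σ : Equiv.Perm (Fin m))
    (hσ : StrictMono fun i => piv s (P (σ i)))
    (Q : Matrix (Fin m) (Fin n) K[X])
    (hQbasis : IsBasisOf Q (rowSpace P)) (hQpopov : IsPopov s Q) :
    ∀ i, piv s (Q i) = piv s (P (σ i)) ∧ pivDeg s (Q i) = pivDeg s (P (σ i)) := by
  obtain ⟨hP0, hPi⟩ := hP
  obtain ⟨⟨hQ0, hQm⟩, -⟩ := hQpopov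
  obtain ⟨-, hspan⟩ := hQbasis
  choose jP hjP using fun i => WithBot.ne_bot_iff_exists.1 (hP0 i)
  choose jQ hjQ using fun i => WithBot.ne_bot_iff_exists.1 (hQ0 i)
  have hLP := fun i => lead_of_piv (hjP i).symm
  have hLQ := fun i => lead_of_piv (hjQ i).symm
  have hjPi : Function.Injective jP := by
    intro a b hab
    apply hPi
    simp only [← hjP, hab]
  have hjQi : Function.Injective jQ := by
    intro a b hab
    apply hQm.injective
    simp only [← hjQ, hab]
  have ne0 : ∀ {v : Fin n → K[X]} {j d}, Lead s v j d → v ≠ 0 := by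
    intro v j d h h0
    exact h.1 (by simp [h0])
  have hPQ : ∀ i, ∃ k, jP i = jQ k ∧ (Q k (jQ k)).natDegree ≤ (P i (jP i)).natDegree := by
    intro i
    have hm : P i ∈ Submodule.span K[X] (Set.range fun i => Q i) := by
      rw [hspan]
      exact Submodule.subset_span ⟨i, rfl⟩
    obtain ⟨k, e, h1, h2⟩ := lead_of_mem_span hLQ hjQi hm (ne0 (hLP i))
    have h3 := h1.piv_eq
    rw [← hjP i] at h3
    have h4 : jP i = jQ k := WithBot.coe_injective h3
    refine ⟨k, h4, ?_⟩
    have := h1.natDegree_eq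
    rw [h4, this]
    exact h2
  have hQP : ∀ i, ∃ k, jQ i = jP k ∧ (P k (jP k)).natDegree ≤ (Q i (jQ i)).natDegree := by
    intro i
    have hm : Q i ∈ Submodule.span K[X] (Set.range fun i => P i) := by
      change Q i ∈ rowSpace P
      rw [← hspan]
      exact Submodule.subset_span ⟨i, rfl⟩
    obtain ⟨k, e, h1, h2⟩ := lead_of_mem_span hLP hjPi hm (ne0 (hLQ i))
    have h3 := h1.piv_eq
    rw [← hjQ i] at h3
    have h4 : jQ i = jP k := WithBot.coe_injective h3
    refine ⟨k, h4, ?_⟩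
    have := h1.natDegree_eq
    rw [h4, this]
    exact h2
  have hfun : (fun i => piv s (Q i)) = fun i => piv s (P (σ i)) := by
    refine (StrictMono.range_inj hQm hσ).1 ?_
    ext x
    constructor
    · rintro ⟨i, rfl⟩
      obtain ⟨k, hk, -⟩ := hQP i
      exact ⟨σ.symm k, by simp [← hjP, ← hjQ, hk]⟩
    · rintro ⟨i, rfl⟩
      obtain ⟨k, hk, -⟩ := hPQ (σ i)
      exact ⟨k, by simp [← hjP, ← hjQ, hk]⟩
  intro i
  have hi : piv s (Q i) = piv s (P (σ i)) := congrFun hfun i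
  refine ⟨hi, ?_⟩
  rw [(hLQ i).pivDeg_eq, (hLP (σ i)).pivDeg_eq]
  rw [← hjQ, ← hjP] at hi
  have hi' : jQ i = jP (σ i) := WithBot.coe_injective hi
  obtain ⟨k, hk, hk2⟩ := hQP i
  obtain rfl : σ i = k := hjPi (hi'.symm.trans hk)
  obtain ⟨l, hl, hl2⟩ := hPQ (σ i)
  obtain rfl : i = l := hjQi (hi'.trans hl)
  exact le_antisymm hl2 hk2
end

section
/- Let K be a field, P ∈ K[x]^{m×n}, B ∈ K[x]^{k×m}, s ∈ ℤ^n, and t = rdeg_s(P) ∈ ℤ^m. Then: (i) if P is in s-reduced form and B is in t-reduced form, then BP is in s-reduced form; (ii) if P is in s-weak Popov form and B is in t-weak Popov form, then BP is in s-weak Popov form. -/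
open Polynomial Matrix

section Aux
variable {K : Type*} [Field K]

lemma aux_degZ_ne {p : K[X]} (hp : p ≠ 0) : degZ p = ((p.natDegree : ℤ) : WithBot ℤ) := by
  unfold degZ
  rw [Polynomial.degree_eq_natDegree hp]
  rfl

lemma aux_degZ_zero : degZ (0 : K[X]) = ⊥ := by
  unfold degZ
  rw [Polynomial.degree_zero]
  rfl

lemma aux_degZ_le (p : K[X]) (a c : ℤ) :
    degZ p + (c : WithBot ℤ) ≤ (a : WithBot ℤ) ↔ ∀ e, a - c < e → coeffZ p e = 0 := by
  by_cases hp : p = 0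
  · subst hp
    simp [aux_degZ_zero, coeffZ]
  · rw [aux_degZ_ne hp, ← WithBot.coe_add, WithBot.coe_le_coe]
    constructor
    · intro h e he
      unfold coeffZ
      split_ifs with h0
      · apply Polynomial.coeff_eq_zero_of_natDegree_lt
        omega
      · rfl
    · intro h
      by_contra hc
      have := h p.natDegree (by omega)
      simp [coeffZ, hp] at this

lemma aux_degZ_eq (p : K[X]) (a c : ℤ) (hle : degZ p + (c : WithBot ℤ) ≤ (a : WithBot ℤ)) :
    (degZ p + (c : WithBot ℤ) = (a : WithBot ℤ)) ↔ coeffZ p (a - c) ≠ 0 := by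
  by_cases hp : p = 0
  · subst hp
    simp [aux_degZ_zero, coeffZ]
  · rw [aux_degZ_ne hp, ← WithBot.coe_add, WithBot.coe_le_coe] at hle
    rw [aux_degZ_ne hp, ← WithBot.coe_add, WithBot.coe_inj]
    constructor
    · intro h
      have : a - c = p.natDegree := by omega
      rw [this]
      simp [coeffZ, hp]
    · intro h
      by_contra hc
      apply h
      unfold coeffZ
      split_ifs with h0
      · apply Polynomial.coeff_eq_zero_of_natDegree_lt
        omega
      · rfl

lemma aux_rdeg_le {n : ℕ} (s : Fin n → ℤ) (v : Fin n → K[X]) (d : ℤ) :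
    rdegRow s v ≤ (d : WithBot ℤ) ↔ ∀ j, ∀ e, d - s j < e → coeffZ (v j) e = 0 := by
  unfold rdegRow
  rw [Finset.sup_le_iff]
  simp [aux_degZ_le]

lemma aux_le_rdeg {n : ℕ} (s : Fin n → ℤ) (v : Fin n → K[X]) (j : Fin n) :
    degZ (v j) + (s j : WithBot ℤ) ≤ rdegRow s v :=
  Finset.le_sup (f := fun j => degZ (v j) + (s j : WithBot ℤ)) (Finset.mem_univ j)

lemma aux_rdeg_eq {n : ℕ} (s : Fin n → ℤ) (v : Fin n → K[X]) (d : ℤ)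
    (h : rdegRow s v ≤ (d : WithBot ℤ)) (j : Fin n) (hj : coeffZ (v j) (d - s j) ≠ 0) :
    rdegRow s v = (d : WithBot ℤ) := by
  apply le_antisymm h
  rw [← (aux_degZ_eq (v j) d (s j) ((aux_le_rdeg s v j).trans h)).2 hj]
  exact aux_le_rdeg s v j

lemma aux_piv_iff {n : ℕ} (s : Fin n → ℤ) (v : Fin n → K[X]) (d : ℤ)
    (h : rdegRow s v = (d : WithBot ℤ)) (j : Fin n) :
    piv s v = (j : WithBot (Fin n)) ↔
      coeffZ (v j) (d - s j) ≠ 0 ∧ ∀ j', j < j' → coeffZ (v j') (d - s j') = 0 := by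
  classical
  have key : ∀ j', (v j' ≠ 0 ∧ degZ (v j') + (s j' : WithBot ℤ) = rdegRow s v) ↔
      coeffZ (v j') (d - s j') ≠ 0 := by
    intro j'
    rw [h, aux_degZ_eq _ _ _ ((aux_le_rdeg s v j').trans h.le)]
    constructor
    · exact fun h => h.2
    · refine fun h => ⟨fun h0 => h ?_, h⟩
      simp [h0, coeffZ]
  unfold piv
  constructor
  · intro hm
    refine ⟨(key j).1 (Finset.mem_filter.1 (Finset.mem_of_max hm)).2, ?_⟩
    intro j' hj'
    by_contra hc
    have := Finset.le_max_of_eq (Finset.mem_filter.2 ⟨Finset.mem_univ j', (key j').2 hc⟩) hm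
    exact absurd hj' (not_lt.2 this)
  · rintro ⟨h1, h2⟩
    apply le_antisymm
    · apply Finset.max_le
      intro a ha
      rw [WithBot.coe_le_coe]
      by_contra hc
      exact (key a).1 (Finset.mem_filter.1 ha).2 (h2 a (not_le.1 hc))
    · exact Finset.le_max (Finset.mem_filter.2 ⟨Finset.mem_univ j, (key j).2 h1⟩)

lemma aux_rdeg_of_piv {n : ℕ} (s : Fin n → ℤ) (v : Fin n → K[X])
    (h : piv s v ≠ ⊥) : ∃ d : ℤ, rdegRow s v = (d : WithBot ℤ) := by
  classical
  obtain ⟨j, hj⟩ := WithBot.ne_bot_iff_exists.1 h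
  have hm : v j ≠ 0 ∧ degZ (v j) + (s j : WithBot ℤ) = rdegRow s v := by
    have := Finset.mem_of_max hj.symm
    exact (Finset.mem_filter.1 this).2
  exact ⟨_, by rw [← hm.2, aux_degZ_ne hm.1, ← WithBot.coe_add]⟩

lemma aux_eq_zero (p : K[X]) (a : ℤ) (ha : a < 0) (hp : ∀ e, a < e → coeffZ p e = 0) :
    p = 0 := by
  ext k
  have := hp k (by omega)
  simpa [coeffZ] using this

lemma aux_natDegree (p : K[X]) (a : ℕ) (hp : ∀ e, (a : ℤ) < e → coeffZ p e = 0) :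
    p.natDegree ≤ a := by
  rw [Polynomial.natDegree_le_iff_coeff_eq_zero]
  intro k hk
  have := hp k (by omega)
  simpa [coeffZ] using this

lemma aux_mul (p q : K[X]) (a b : ℤ) (hp : ∀ e, a < e → coeffZ p e = 0)
    (hq : ∀ e, b < e → coeffZ q e = 0) :
    (∀ e, a + b < e → coeffZ (p * q) e = 0) ∧
      coeffZ (p * q) (a + b) = coeffZ p a * coeffZ q b := by
  by_cases ha : a < 0
  · simp [aux_eq_zero p a ha hp, coeffZ]
  by_cases hb : b < 0
  · simp [aux_eq_zero q b hb hq, coeffZ]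
  lift a to ℕ using by omega
  lift b to ℕ using by omega
  have h1 := aux_natDegree p a hp
  have h2 := aux_natDegree q b hq
  constructor
  · intro e he
    unfold coeffZ
    rw [if_pos (by omega)]
    apply Polynomial.coeff_eq_zero_of_natDegree_lt
    have := Polynomial.natDegree_mul_le (p := p) (q := q)
    omega
  · rw [← Nat.cast_add]
    simp only [coeffZ, Nat.cast_nonneg, if_true, Int.toNat_natCast]
    exact Polynomial.coeff_mul_add_eq_of_natDegree_le h1 h2

lemma aux_coeffZ_sum {m : ℕ} (f : Fin m → K[X]) (e : ℤ) :
    coeffZ (∑ l, f l) e = ∑ l, coeffZ (f l) e := by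
  unfold coeffZ
  split_ifs
  · exact Polynomial.finsetSum_coeff _ _ _
  · simp

lemma aux_lm {ι : Type*} {n : ℕ} (s : Fin n → ℤ) (P : Matrix ι (Fin n) K[X]) (i : ι) (d : ℤ)
    (h : rdegRow s (P i) = (d : WithBot ℤ)) (j : Fin n) :
    lm s P i j = coeffZ (P i j) (d - s j) := by
  have h' : rdeg s P i = (d : WithBot ℤ) := h
  simp [lm, h']

lemma aux_prod {k m n : ℕ}
    (P : Matrix (Fin m) (Fin n) K[X]) (B : Matrix (Fin k) (Fin m) K[X])
    (s : Fin n → ℤ) (t : Fin m → ℤ)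
    (ht : ∀ i, rdegRow s (P i) = ((t i : ℤ) : WithBot ℤ)) (i : Fin k) (d : ℤ)
    (hd : rdegRow t (B i) = (d : WithBot ℤ)) :
    rdegRow s ((B * P) i) ≤ (d : WithBot ℤ) ∧
    ∀ j, coeffZ ((B * P) i j) (d - s j) = (lm t B i ᵥ* lm s P) j := by
  have hB := (aux_rdeg_le t (B i) d).1 hd.le
  have hP := fun l => (aux_rdeg_le s (P l) (t l)).1 (ht l).le
  have key := fun l j => aux_mul (B i l) (P l j) _ _ (hB l) (hP l j)
  constructor
  · rw [aux_rdeg_le]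
    intro j e he
    rw [Matrix.mul_apply, aux_coeffZ_sum]
    exact Finset.sum_eq_zero fun l _ => (key l j).1 e (by omega)
  · intro j
    rw [Matrix.mul_apply, aux_coeffZ_sum, Matrix.vecMul, dotProduct]
    refine Finset.sum_congr rfl fun l _ => ?_
    rw [aux_lm t B i d hd, aux_lm s P l _ (ht l), ← (key l j).2]
    congr 1
    omega

end Aux

/-- Lemma 2.5: with `t = rdeg_s(P)`, products of
`s`-reduced (resp. `s`-weak Popov) and `t`-reduced (resp. `t`-weak Popov)
matrices are `s`-reduced (resp. in `s`-weak Popov form). -/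
theorem product_of_reduced {K : Type*} [Field K] {k m n : ℕ}
    (P : Matrix (Fin m) (Fin n) K[X]) (B : Matrix (Fin k) (Fin m) K[X])
    (s : Fin n → ℤ) (t : Fin m → ℤ)
    (ht : ∀ i, rdeg s P i = ((t i : ℤ) : WithBot ℤ)) :
    (IsReducedForm s P → IsReducedForm t B → IsReducedForm s (B * P)) ∧
    (IsWeakPopov s P → IsWeakPopov t B → IsWeakPopov s (B * P)) := by
  change ∀ i, rdegRow s (P i) = ((t i : ℤ) : WithBot ℤ) at ht
  constructor
  · intro hP hB
    have hinj : Function.Injective (lm s P).vecMul := Matrix.vecMul_injective_iff.2 hP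
    have hrow : ∀ i, lm s (B * P) i = lm t B i ᵥ* lm s P := by
      intro i
      have hne : lm t B i ≠ 0 := hB.ne_zero i
      have hbot : rdegRow t (B i) ≠ ⊥ := by
        intro h
        apply hne
        have h' : rdeg t B i = ⊥ := h
        ext j
        simp [lm, h']
      obtain ⟨d, hd⟩ := WithBot.ne_bot_iff_exists.1 hbot
      obtain ⟨h1, h2⟩ := aux_prod P B s t ht i d hd.symm
      have hne2 : lm t B i ᵥ* lm s P ≠ 0 := by
        intro h
        apply hne
        apply hinj
        simpa using h
      obtain ⟨j, hj⟩ := Function.ne_iff.1 hne2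
      have h3 := aux_rdeg_eq s _ d h1 j (by rw [h2]; exact hj)
      ext j'
      rw [aux_lm s (B * P) i d h3, h2]
    unfold IsReducedForm
    have := LinearIndependent.map' hB (lm s P).vecMulLinear (LinearMap.ker_eq_bot.2 hinj)
    have he : (fun i => lm s (B * P) i) = (lm s P).vecMulLinear ∘ fun i => lm t B i :=
      funext hrow
    rw [he]
    exact this
  · rintro ⟨hP1, hP2⟩ ⟨hB1, hB2⟩
    choose π hπ using fun l => WithBot.ne_bot_iff_exists.1 (hP1 l)
    choose β hβ using fun i => WithBot.ne_bot_iff_exists.1 (hB1 i)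
    have hπm : StrictMono π := fun a b hab => by
      have := hP2 hab
      simp only [← hπ] at this
      exact WithBot.coe_lt_coe.1 this
    have hβm : StrictMono β := fun a b hab => by
      have := hB2 hab
      simp only [← hβ] at this
      exact WithBot.coe_lt_coe.1 this
    have hPl := fun l => (aux_piv_iff s (P l) (t l) (ht l) (π l)).1 (hπ l).symm
    have hpiv : ∀ i, piv s ((B * P) i) = (π (β i) : WithBot (Fin n)) := by
      intro i
      obtain ⟨d, hd⟩ := aux_rdeg_of_piv t (B i) (hB1 i)
      obtain ⟨h1, h2⟩ := aux_prod P B s t ht i d hd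
      obtain ⟨hb1, hb2⟩ := (aux_piv_iff t (B i) d hd (β i)).1 (hβ i).symm
      have hne : coeffZ ((B * P) i (π (β i))) (d - s (π (β i))) ≠ 0 := by
        rw [h2, Matrix.vecMul, dotProduct, Finset.sum_eq_single (β i)]
        · rw [aux_lm t B i d hd, aux_lm s P _ _ (ht _)]
          exact mul_ne_zero hb1 (hPl _).1
        · intro l _ hl
          rw [aux_lm t B i d hd, aux_lm s P _ _ (ht _)]
          rcases lt_or_gt_of_ne hl with h | h
          · rw [(hPl l).2 _ (hπm h), mul_zero]
          · rw [hb2 l h, zero_mul]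
        · simp
      rw [aux_piv_iff s _ d (aux_rdeg_eq s _ d h1 _ hne)]
      refine ⟨hne, fun j hj => ?_⟩
      rw [h2, Matrix.vecMul, dotProduct]
      refine Finset.sum_eq_zero fun l _ => ?_
      rw [aux_lm t B i d hd, aux_lm s P _ _ (ht _)]
      rcases le_or_gt l (β i) with h | h
      · rw [(hPl l).2 _ ((hπm.monotone h).trans_lt hj), mul_zero]
      · rw [hb2 l h, zero_mul]
    refine ⟨fun i => by rw [hpiv]; exact WithBot.coe_ne_bot, fun a b hab => ?_⟩
    simp only [hpiv]
    exact WithBot.coe_lt_coe.2 (hπm (hβm hab))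
end

section
/- Let K be a field, v ∈ ℤ^n, let K ∈ K[x]^{n×n} be in v-weak Popov form, and let d = rdeg_v(K) ∈ ℤ^n. Let J denote the n×n reversal matrix (ones on the antidiagonal, zeros elsewhere) and dJ = (d_n,…,d_1) the reversed tuple. Let P be the (−dJ)-Popov form of J K^T J, that is, the unique basis of the row space of J K^T J in (−dJ)-Popov form. Then P^T is in 0-weak Popov form and det(K) = det(lm_v(K)) · det(P^T). -/
open Polynomial Matrix

theorem aux_perm_lt {n : ℕ} (σ : Equiv.Perm (Fin n)) (h : σ ≠ 1) : ∃ i, σ i < i := by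
  by_contra hc
  push Not at hc
  apply h
  have hs : ∑ i, ((i : Fin n) : ℕ) = ∑ i, ((σ i : Fin n) : ℕ) :=
    (Equiv.sum_comp σ (fun i : Fin n => (i : ℕ))).symm
  have := (Finset.sum_eq_sum_iff_of_le (fun i _ => Fin.le_def.mp (hc i))).mp hs
  ext i
  simpa using (this i (Finset.mem_univ i)).symm

theorem aux_det {K : Type*} [Field K] {n : ℕ} (A : Matrix (Fin n) (Fin n) K[X])
    (a b : Fin n → ℤ) (h0 : ∀ i, A i i ≠ 0) (hd : ∀ i, ((A i i).natDegree : ℤ) = a i - b i)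
    (hle : ∀ i j, A i j ≠ 0 → ((A i j).natDegree : ℤ) ≤ a i - b j)
    (hlt : ∀ i j, i < j → A i j ≠ 0 → ((A i j).natDegree : ℤ) < a i - b j) :
    A.det.leadingCoeff = ∏ i, (A i i).leadingCoeff := by
  classical
  have hp0 : ∏ i, A i i ≠ 0 := Finset.prod_ne_zero_iff.mpr fun i _ => h0 i
  rw [Matrix.det_apply, ← Finset.add_sum_erase _ _ (Finset.mem_univ (1 : Equiv.Perm (Fin n)))]
  rw [Polynomial.leadingCoeff_add_of_degree_lt']
  · simp [Polynomial.leadingCoeff_prod]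
  · refine lt_of_le_of_lt (Polynomial.degree_sum_le _ _) ?_
    have hb : ⊥ < (∏ i, A i i).degree := bot_lt_iff_ne_bot.mpr (by simpa using hp0)
    simp only [Equiv.Perm.sign_one, one_smul, Equiv.Perm.one_apply]
    rw [Finset.sup_lt_iff hb]
    intro σ hσ
    have hσ1 : σ ≠ 1 := Finset.ne_of_mem_erase hσ
    have hdeg : (Equiv.Perm.sign σ • ∏ i, A (σ i) i).degree = (∏ i, A (σ i) i).degree := by
      rcases Int.units_eq_one_or (Equiv.Perm.sign σ) with h | h <;> simp [h]
    rw [hdeg]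
    by_cases hz : ∏ i, A (σ i) i = 0
    · rw [hz]; simpa using hb
    · rw [Polynomial.degree_eq_natDegree hz, Polynomial.degree_eq_natDegree hp0]
      have hz' := Finset.prod_ne_zero_iff.mp hz
      rw [Polynomial.natDegree_prod _ _ hz', Polynomial.natDegree_prod _ _ (fun i _ => h0 i)]
      norm_cast
      zify
      obtain ⟨k, hk⟩ := aux_perm_lt σ hσ1
      calc ∑ i, ((A (σ i) i).natDegree : ℤ) < ∑ i, (a (σ i) - b i) :=
            Finset.sum_lt_sum (fun i hi => hle _ _ (hz' i hi))
              ⟨k, Finset.mem_univ k, hlt _ _ hk (hz' k (Finset.mem_univ k))⟩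
        _ = ∑ i, ((A i i).natDegree : ℤ) := by
            simp only [hd, Finset.sum_sub_distrib]
            rw [Equiv.sum_comp σ a]

theorem aux_degZ {K : Type*} [Field K] {p : K[X]} (h : p ≠ 0) :
    degZ p = (((p.natDegree : ℤ)) : WithBot ℤ) := by
  rw [degZ, Polynomial.degree_eq_natDegree h]; rfl

theorem aux_piv {K : Type*} [Field K] {n : ℕ} {s : Fin n → ℤ} {r : Fin n → K[X]} {j : Fin n}
    (h : piv s r = (j : WithBot (Fin n))) :
    r j ≠ 0 ∧ rdegRow s r = (((r j).natDegree + s j : ℤ) : WithBot ℤ) ∧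
    (∀ k, r k ≠ 0 → ((r k).natDegree : ℤ) + s k ≤ (r j).natDegree + s j) ∧
    (∀ k, j < k → r k ≠ 0 → ((r k).natDegree : ℤ) + s k < (r j).natDegree + s j) := by
  classical
  unfold piv at h
  have hm := Finset.mem_of_max h
  simp only [Finset.mem_filter, Finset.mem_univ, true_and] at hm
  obtain ⟨h0, hr⟩ := hm
  rw [aux_degZ h0] at hr
  have hle : ∀ k, r k ≠ 0 → ((r k).natDegree : ℤ) + s k ≤ (r j).natDegree + s j := by
    intro k hk
    have : degZ (r k) + (s k : WithBot ℤ) ≤ rdegRow s r :=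
      Finset.le_sup (f := fun j => degZ (r j) + (s j : WithBot ℤ)) (Finset.mem_univ k)
    rw [← hr, aux_degZ hk] at this
    exact_mod_cast this
  refine ⟨h0, by rw [← hr]; rfl, hle, ?_⟩
  intro k hjk hk
  refine lt_of_le_of_ne (hle k hk) fun he => ?_
  have hmem : k ∈ Finset.univ.filter
      fun j => r j ≠ 0 ∧ degZ (r j) + (s j : WithBot ℤ) = rdegRow s r := by
    simp only [Finset.mem_filter, Finset.mem_univ, true_and]
    refine ⟨hk, ?_⟩
    rw [← hr, aux_degZ hk]
    exact_mod_cast he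
  exact absurd (Finset.le_max_of_eq hmem (by convert h)) (not_le.mpr hjk)

theorem aux_diag {K : Type*} [Field K] {n : ℕ} {s : Fin n → ℤ}
    {A : Matrix (Fin n) (Fin n) K[X]} (h : IsWeakPopov s A) (i : Fin n) :
    piv s (A i) = (i : WithBot (Fin n)) := by
  obtain ⟨h0, hs⟩ := h
  have hf : StrictMono fun i => (piv s (A i)).unbot (h0 i) := by
    intro i j hij
    have := hs hij
    rw [← WithBot.coe_lt_coe]
    simpa using this
  have : (piv s (A i)).unbot (h0 i) = i := le_antisymm hf.apply_le hf.le_apply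
  rw [← WithBot.coe_unbot (piv s (A i)) (h0 i), this]

theorem aux_piv_mk {K : Type*} [Field K] {n : ℕ} {r : Fin n → K[X]} {j : Fin n}
    (h0 : r j ≠ 0) (h : ∀ k, k ≠ j → (r k).degree < (r j).degree) :
    piv (fun _ => (0 : ℤ)) r = (j : WithBot (Fin n)) := by
  classical
  have key : ∀ k, k ≠ j → degZ (r k) < degZ (r j) := by
    intro k hk
    have := h k hk
    by_cases hz : r k = 0
    · rw [aux_degZ h0, hz]; simp [degZ]
    · rw [aux_degZ h0, aux_degZ hz]
      have := Polynomial.natDegree_lt_natDegree hz this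
      exact_mod_cast this
  have hr : rdegRow (fun _ => (0 : ℤ)) r = degZ (r j) := by
    unfold rdegRow
    simp only [WithBot.coe_zero, add_zero]
    apply le_antisymm
    · refine Finset.sup_le fun k _ => ?_
      by_cases hk : k = j
      · rw [hk]
      · exact (key k hk).le
    · exact Finset.le_sup (f := fun j => degZ (r j)) (Finset.mem_univ j)
  unfold piv
  rw [hr, show (Finset.univ.filter fun k => r k ≠ 0 ∧
      degZ (r k) + ((0 : ℤ) : WithBot ℤ) = degZ (r j)) = {j} from ?_]
  · simp
  · ext k
    simp only [Finset.mem_filter, Finset.mem_univ, true_and, WithBot.coe_zero, add_zero,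
      Finset.mem_singleton]
    constructor
    · rintro ⟨_, h2⟩
      by_contra hk
      exact (key k hk).ne h2
    · rintro rfl
      exact ⟨h0, rfl⟩

theorem aux_span {K : Type*} [Field K] {n : ℕ} (A B : Matrix (Fin n) (Fin n) K[X])
    (h : Submodule.span K[X] (Set.range fun i => A i) ≤
      Submodule.span K[X] (Set.range fun i => B i)) : ∃ U, A = U * B := by
  have : ∀ i, ∃ c : Fin n → K[X], ∑ k, c k • B k = A i := fun i =>
    (Submodule.mem_span_range_iff_exists_fun _).mp (h (Submodule.subset_span ⟨i, rfl⟩))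
  choose U hU using this
  refine ⟨Matrix.of U, ?_⟩
  ext1 i j
  rw [← hU i]
  simp [Matrix.mul_apply, Finset.sum_apply]

/-- Lemma 3.2 (d): if `M` is in `v`-weak Popov form with
`d = rdeg_v(M)`, and `P` is the `(−dJ)`-Popov form of `J Mᵀ J`, then `Pᵀ` is in
`0`-weak Popov form and `det(M) = det(lm_v(M)) · det(Pᵀ)`. -/
theorem det_via_rev_popov {K : Type*} [Field K] {n : ℕ}
    (v : Fin n → ℤ) (M : Matrix (Fin n) (Fin n) K[X]) (hM : IsWeakPopov v M)
    (d : Fin n → ℤ) (hd : ∀ i, rdeg v M i = ((d i : ℤ) : WithBot ℤ))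
    (P : Matrix (Fin n) (Fin n) K[X])
    (hPbasis : IsBasisOf P (rowSpace (Matrix.of fun i j => M (Fin.rev j) (Fin.rev i))))
    (hPpopov : IsPopov (fun i => -d (Fin.rev i)) P) :
    IsWeakPopov (fun _ => (0 : ℤ)) Pᵀ ∧
      M.det = Polynomial.C (lm v M).det * Pᵀ.det := by
  classical
  have hPd := aux_diag hPpopov.1
  have hP0 : ∀ i, (P i i).Monic := fun i => (hPpopov.2 i i (hPd i)).1
  have hPlt : ∀ i j, i ≠ j → (P i j).degree < (P j j).degree := fun i j hij =>
    (hPpopov.2 j j (hPd j)).2 i hij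
  have hPt : ∀ i, piv (fun _ => (0 : ℤ)) (Pᵀ i) = (i : WithBot (Fin n)) := fun i =>
    aux_piv_mk (r := Pᵀ i) (hP0 i).ne_zero (fun k hk => hPlt k i hk)
  refine ⟨⟨fun i => by rw [hPt]; simp, fun i j hij => ?_⟩, ?_⟩
  · simp only [hPt]; exact_mod_cast hij
  have hPdet : P.det.leadingCoeff = 1 := by
    rw [aux_det P (fun _ => 0) (fun j => -((P j j).natDegree : ℤ))
      (fun i => (hP0 i).ne_zero) (fun i => by simp)]
    · exact Finset.prod_eq_one fun i _ => hP0 i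
    · intro i j h
      by_cases hij : i = j
      · subst hij; simp
      · have := Polynomial.natDegree_lt_natDegree h (hPlt i j hij)
        simp only [zero_sub, neg_neg]; exact_mod_cast this.le
    · intro i j hij h
      have := Polynomial.natDegree_lt_natDegree h (hPlt i j hij.ne)
      simp only [zero_sub, neg_neg]; exact_mod_cast this
  have hMd := fun i => aux_piv (aux_diag hM i)
  have hde : ∀ i, d i = (M i i).natDegree + v i := by
    intro i
    have h1 := hd i
    unfold rdeg at h1
    rw [(hMd i).2.1] at h1
    exact_mod_cast h1.symm
  have hMdet : M.det.leadingCoeff = ∏ i, (M i i).leadingCoeff := by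
    apply aux_det M d v (fun i => (hMd i).1)
    · intro i; have := hde i; omega
    · intro i j h
      have := (hMd i).2.2.1 j h
      have := hde i; omega
    · intro i j hij h
      have := (hMd i).2.2.2 j hij h
      have := hde i; omega
  have hlm : ∀ i j, lm v M i j = coeffZ (M i j) (d i - v j) := by
    intro i j
    simp only [lm, Matrix.of_apply, hd i, WithBot.recBotCoe_coe]
  have hlmdet : (lm v M).det = ∏ i, (M i i).leadingCoeff := by
    rw [Matrix.det_of_lowerTriangular]
    · refine Finset.prod_congr rfl fun i _ => ?_
      rw [hlm, hde i]
      simp [coeffZ]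
    · intro i j hij
      have hij : i < j := hij
      rw [hlm, coeffZ]
      split_ifs with h
      · by_cases hz : M i j = 0
        · simp [hz]
        · apply Polynomial.coeff_eq_zero_of_natDegree_lt
          have := (hMd i).2.2.2 j hij hz
          have := hde i
          omega
      · rfl
  set N : Matrix (Fin n) (Fin n) K[X] := Matrix.of fun i j => M (Fin.rev j) (Fin.rev i) with hN
  have hNdet : N.det = M.det := by
    have : N = (M.submatrix Fin.revPerm Fin.revPerm)ᵀ := by
      ext1 i j; simp [hN]
    rw [this, Matrix.det_transpose, Matrix.det_submatrix_equiv_self]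
  obtain ⟨U, hU⟩ := aux_span P N hPbasis.2.le
  obtain ⟨V, hV⟩ := aux_span N P hPbasis.2.ge
  have h1 : P.det = U.det * N.det := by rw [← Matrix.det_mul, ← hU]
  have h2 : N.det = V.det * P.det := by rw [← Matrix.det_mul, ← hV]
  have hPne : P.det ≠ 0 := by
    intro h; rw [h] at hPdet; simp at hPdet
  have hUV : V.det * U.det = 1 := by
    apply mul_right_cancel₀ hPne
    calc V.det * U.det * P.det = U.det * (V.det * P.det) := by ring
      _ = 1 * P.det := by rw [← h2, ← h1, one_mul]
  obtain ⟨c, -, hc⟩ := Polynomial.isUnit_iff.mp (IsUnit.of_mul_eq_one _ hUV)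
  rw [hNdet, ← hc] at h2
  rw [Matrix.det_transpose, hlmdet, ← hMdet]
  have : M.det.leadingCoeff = c := by
    rw [h2, Polynomial.leadingCoeff_mul, hPdet]; simp
  rw [this, h2]
end

section
/- Let K be a field, 1 ≤ k < m, and let P ∈ K[x]^{m×m} be partitioned in blocks as P = [[P1, P2],[P3, P4]] with P1 ∈ K[x]^{k×k} and P4 ∈ K[x]^{(m−k)×(m−k)}. Let K1 ∈ K[x]^{(m−k)×k} and K2 ∈ K[x]^{(m−k)×(m−k)} satisfy K1·P1 + K2·P3 = 0. Then det(K2) · det(P) = det(P1) · det(K1·P2 + K2·P4). -/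
open Polynomial Matrix

/-- block triangularization determinant identity:
if `K1·P1 + K2·P3 = 0`, then
`det(K2)·det([[P1,P2],[P3,P4]]) = det(P1)·det(K1·P2 + K2·P4)`. -/
theorem block_det_identity {K : Type*} [Field K] {k l : ℕ} (hk : 0 < k) (hl : 0 < l)
    (P1 : Matrix (Fin k) (Fin k) K[X]) (P2 : Matrix (Fin k) (Fin l) K[X])
    (P3 : Matrix (Fin l) (Fin k) K[X]) (P4 : Matrix (Fin l) (Fin l) K[X])
    (K1 : Matrix (Fin l) (Fin k) K[X]) (K2 : Matrix (Fin l) (Fin l) K[X])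
    (h : K1 * P1 + K2 * P3 = 0) :
    K2.det * (Matrix.fromBlocks P1 P2 P3 P4).det =
      P1.det * (K1 * P2 + K2 * P4).det := by
  have e : Matrix.fromBlocks (1 : Matrix (Fin k) (Fin k) K[X]) 0 K1 K2 *
      Matrix.fromBlocks P1 P2 P3 P4 =
      Matrix.fromBlocks P1 P2 0 (K1 * P2 + K2 * P4) := by
    rw [Matrix.fromBlocks_multiply, h]
    simp
  have e2 := congrArg Matrix.det e
  rw [Matrix.det_mul, Matrix.det_fromBlocks_zero₁₂, Matrix.det_fromBlocks_zero₂₁,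
    Matrix.det_one, one_mul] at e2
  exact e2
end
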